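/- arXiv:1410.0715 — 3 statements merged into one kernel-verified Lean document; each statement's English description precedes it below -/
import Mathlib

section
/- Let X be a Banach space, J ⊆ ℝ an open interval, and {F_t : X → X}_{t∈J} a family of continuous linear maps such that for every x ∈ X the map t ↦ F_t(x) is smooth (infinitely differentiable in the norm topology). If each F_t is bijective, then for every x ∈ X the map t ↦ F_t⁻¹(x) is also smooth. -/
/-!
Everything rests on a uniform boundedness principle along filters: if `g i x = O(φ i)` for every
`x`, then `g i = O(φ i)` in operator norm. Applied to `F u - F v` it shows that a family which is
pointwise differentiable at `v` satisfies `F u - F v = O(u - v)` in norm. Hence it is norm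
continuous at `v`, and its pointwise derivatives form a bounded bilinear map. By the mean value
inequality, a norm continuous pointwise derivative is a norm derivative, so inductively a pointwise
`C^(n+1)` family is `C^n` in norm. Smoothness then passes to the inverses because inversion of
operators is smooth.
-/

open Filter Topology Asymptotics
open scoped ContDiff

universe u v

section BanachSteinhaus

variable {𝕜 X Y W ι : Type*} [RCLike 𝕜] [SeminormedAddCommGroup X] [NormedSpace 𝕜 X]
  [CompleteSpace X] [SeminormedAddCommGroup Y] [NormedSpace 𝕜 Y] [SeminormedAddCommGroup W]
  {l : Filter ι} [l.IsCountablyGenerated]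

theorem isBigO_of_forall_isBigO_apply {g : ι → X →L[𝕜] Y} {φ : ι → W}
    (h : ∀ x, (fun i => g i x) =O[l] φ) : g =O[l] φ := by
  by_contra hg
  have hfreq (n : ℕ) : ∃ᶠ i in l, n * ‖φ i‖ < ‖g i‖ := fun hn =>
    hg (IsBigO.of_bound n (hn.mono fun _ => le_of_not_gt))
  obtain ⟨s, hs⟩ := l.exists_antitone_basis
  choose i hi_gt hi_mem using fun n => ((hfreq n).and_eventually (hs.mem n)).exists
  have hi : Tendsto i atTop l := hs.tendsto hi_mem
  have hg_pos (n : ℕ) : 0 < ‖g (i n)‖ :=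
    (by positivity : 0 ≤ n * ‖φ (i n)‖).trans_lt (hi_gt n)
  -- Rescaling `g (i n)` to norm `n` keeps it pointwise bounded, as `n * ‖φ (i n)‖ < ‖g (i n)‖`.
  let T (n : ℕ) : X →L[𝕜] Y := ((n / ‖g (i n)‖ : ℝ) : 𝕜) • g (i n)
  have hT_norm (n : ℕ) : ‖T n‖ = n := by
    simp [T, norm_smul, (hg_pos n).ne']
  have hT_apply (x : X) : ∃ C, ∀ n, ‖T n x‖ ≤ C := by
    obtain ⟨C, hC, hx⟩ := ((h x).comp_tendsto hi).exists_pos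
    have h_eventually : ∀ᶠ n in atTop, ‖T n x‖ ≤ C := by
      filter_upwards [hx.bound] with n hn
      calc ‖T n x‖ = n / ‖g (i n)‖ * ‖g (i n) x‖ := by simp [T, norm_smul]
        _ ≤ n / ‖g (i n)‖ * (C * ‖φ (i n)‖) := by gcongr; exact hn
        _ = C * (n * ‖φ (i n)‖ / ‖g (i n)‖) := by ring
        _ ≤ C := mul_le_of_le_one_right hC.le (div_le_one_of_le₀ (hi_gt n).le (norm_nonneg _))
    obtain ⟨B, hB⟩ := (isBoundedUnder_of_eventually_le h_eventually).bddAbove_range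
    exact ⟨B, fun n => hB ⟨n, rfl⟩⟩
  obtain ⟨C, hC⟩ := banach_steinhaus hT_apply
  obtain ⟨n, hn⟩ := exists_nat_gt C
  exact hn.not_ge ((hT_norm n).symm.trans_le (hC n))

end BanachSteinhaus

section PointwiseDerivative

variable {𝕜 V X Y : Type*} [RCLike 𝕜] [NormedAddCommGroup V] [NormedSpace 𝕜 V]
  [NormedAddCommGroup X] [NormedSpace 𝕜 X] [NormedAddCommGroup Y] [NormedSpace 𝕜 Y]
  {F : V → X →L[𝕜] Y} {v : V}

theorem isBigO_sub_of_forall_differentiableAt_apply [CompleteSpace X]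
    (hF : ∀ x, DifferentiableAt 𝕜 (fun u => F u x) v) :
    (fun u => F u - F v) =O[𝓝 v] fun u => u - v :=
  isBigO_of_forall_isBigO_apply fun x => (hF x).isBigO_sub

theorem continuousAt_of_forall_differentiableAt_apply [CompleteSpace X]
    (hF : ∀ x, DifferentiableAt 𝕜 (fun u => F u x) v) : ContinuousAt F v := by
  have h_sub : Tendsto (fun u => u - v) (𝓝 v) (𝓝 0) := tendsto_sub_nhds_zero_iff.2 tendsto_id
  exact tendsto_sub_nhds_zero_iff.1
    ((isBigO_sub_of_forall_differentiableAt_apply hF).trans_tendsto h_sub)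

theorem exists_forall_hasFDerivAt_apply [CompleteSpace X]
    (hF : ∀ x, DifferentiableAt 𝕜 (fun u => F u x) v) :
    ∃ A : X →L[𝕜] V →L[𝕜] Y, ∀ x, HasFDerivAt (fun u => F u x) (A x) v := by
  obtain ⟨C, hC, hbound⟩ := (isBigO_sub_of_forall_differentiableAt_apply hF).exists_pos
  let D : X →ₗ[𝕜] V →L[𝕜] Y :=
    { toFun x := fderiv 𝕜 (fun u => F u x) v
      map_add' x y := by simpa only [map_add] using fderiv_fun_add (hF x) (hF y)
      map_smul' c x := by
        simpa only [map_smul, RingHom.id_apply] using fderiv_fun_const_smul (hF x) c }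
  have hD (x : X) : ‖D x‖ ≤ C * ‖x‖ := by
    refine (hF x).hasFDerivAt.le_of_lip' (by positivity) ?_
    filter_upwards [hbound.bound] with u hu
    calc ‖F u x - F v x‖ ≤ C * ‖u - v‖ * ‖x‖ := (F u - F v).le_of_opNorm_le hu x
      _ = C * ‖x‖ * ‖u - v‖ := by ring
  exact ⟨D.mkContinuous C hD, fun x => (hF x).hasFDerivAt⟩

theorem hasFDerivAt_of_forall_hasFDerivAt_apply {A : V → X →L[𝕜] V →L[𝕜] Y}
    (hF : ∀ᶠ u in 𝓝 v, ∀ x, HasFDerivAt (fun w => F w x) (A u x) u) (hA : ContinuousAt A v) :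
    HasFDerivAt F (A v).flip v := by
  rw [hasFDerivAt_iff_isLittleO, isLittleO_iff]
  intro ε hε
  have h_close : ∀ᶠ u in 𝓝 v, ‖A u - A v‖ ≤ ε := by
    filter_upwards [hA.eventually (Metric.closedBall_mem_nhds (A v) hε)] with u hu
    exact (dist_eq_norm (A u) (A v)).ge.trans hu
  obtain ⟨r, hr, hball⟩ := Metric.eventually_nhds_iff_ball.1 (hF.and h_close)
  filter_upwards [Metric.ball_mem_nhds v hr] with u hu
  refine ContinuousLinearMap.opNorm_le_bound _ (by positivity) fun x => ?_
  let : NormedSpace ℝ V := .restrictScalars ℝ 𝕜 V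
  calc ‖F u x - F v x - A v x (u - v)‖ ≤ ε * ‖x‖ * ‖u - v‖ :=
        (convex_ball v r).norm_image_sub_le_of_norm_hasFDerivWithin_le' (𝕜 := 𝕜)
          (fun w hw => ((hball w hw).1 x).hasFDerivWithinAt)
          (fun w hw => (A w - A v).le_of_opNorm_le (hball w hw).2 x) (Metric.mem_ball_self hr) hu
    _ = ε * ‖u - v‖ * ‖x‖ := by ring

end PointwiseDerivative

section PointwiseContDiff

variable {𝕜 X : Type*} {V : Type u} [RCLike 𝕜] [NormedAddCommGroup V] [NormedSpace 𝕜 V]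
  [NormedAddCommGroup X] [NormedSpace 𝕜 X] [CompleteSpace X] {U : Set V}

-- The induction replaces `Y` by `V →L[𝕜] Y`, which has to live in the same universe.
theorem contDiffOn_of_forall_contDiffOn_succ_apply_same_univ (hU : IsOpen U) (n : ℕ)
    {Y : Type (max u v)} [NormedAddCommGroup Y] [NormedSpace 𝕜 Y] {F : V → X →L[𝕜] Y}
    (hF : ∀ x, ContDiffOn 𝕜 (n + 1) (fun v => F v x) U) : ContDiffOn 𝕜 n F U := by
  have hdiff : ∀ v ∈ U, ∀ x, DifferentiableAt 𝕜 (fun u => F u x) v := fun v hv x =>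
    ((hF x).differentiableOn (by simp)).differentiableAt (hU.mem_nhds hv)
  induction n generalizing Y with
  | zero =>
    exact contDiffOn_zero.2 fun v hv =>
      (continuousAt_of_forall_differentiableAt_apply (hdiff v hv)).continuousWithinAt
  | succ n ih =>
    choose! A hA using fun v hv => exists_forall_hasFDerivAt_apply (hdiff v hv)
    have hA_apply (x : X) : ContDiffOn 𝕜 (n + 1) (fun v => A v x) U :=
      ((hF x).fderiv_of_isOpen hU le_rfl).congr fun v hv => (hA v hv x).fderiv.symm
    have hA_diff : ∀ v ∈ U, ∀ x, DifferentiableAt 𝕜 (fun u => A u x) v := fun v hv x =>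
      ((hA_apply x).differentiableOn (by simp)).differentiableAt (hU.mem_nhds hv)
    have hF_deriv : ∀ v ∈ U, HasFDerivAt F (A v).flip v := fun v hv =>
      hasFDerivAt_of_forall_hasFDerivAt_apply (eventually_of_mem (hU.mem_nhds hv) hA)
        (continuousAt_of_forall_differentiableAt_apply (hA_diff v hv))
    have h_flip : ContDiff 𝕜 n (ContinuousLinearMap.flipₗᵢ 𝕜 X V Y) :=
      LinearIsometryEquiv.contDiff (E := X →L[𝕜] V →L[𝕜] Y) (F := V →L[𝕜] X →L[𝕜] Y) _
    have hA_flip : ContDiffOn 𝕜 n (fun v => (A v).flip) U :=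
      h_flip.comp_contDiffOn (ih hA_apply hA_diff)
    exact (contDiffOn_succ_iff_fderiv_of_isOpen hU).2
      ⟨fun v hv => (hF_deriv v hv).differentiableAt.differentiableWithinAt, by simp,
        hA_flip.congr fun v hv => (hF_deriv v hv).fderiv⟩

theorem contDiffOn_of_forall_contDiffOn_succ_apply {Y : Type v} [NormedAddCommGroup Y]
    [NormedSpace 𝕜 Y] (hU : IsOpen U) (n : ℕ) {F : V → X →L[𝕜] Y}
    (hF : ∀ x, ContDiffOn 𝕜 (n + 1) (fun v => F v x) U) : ContDiffOn 𝕜 n F U := by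
  let e : ULift.{u} Y ≃L[𝕜] Y := ContinuousLinearEquiv.ulift
  have h_lift : ContDiffOn 𝕜 n (fun v => (e.symm : Y →L[𝕜] ULift.{u} Y) ∘L F v) U :=
    contDiffOn_of_forall_contDiffOn_succ_apply_same_univ hU n fun x =>
      e.symm.contDiff.comp_contDiffOn (hF x)
  exact (contDiffOn_const.clm_comp h_lift : ContDiffOn 𝕜 n
    (fun v => (e : ULift.{u} Y →L[𝕜] Y) ∘L (e.symm : Y →L[𝕜] ULift.{u} Y) ∘L F v) U)

end PointwiseContDiff

section Inverse

theorem contDiffOn_inverse_apply {𝕜 V X Y : Type*} [NontriviallyNormedField 𝕜]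
    [NormedAddCommGroup V] [NormedSpace 𝕜 V] [NormedAddCommGroup X] [NormedSpace 𝕜 X]
    [CompleteSpace X] [NormedAddCommGroup Y] [NormedSpace 𝕜 Y] {n : ℕ∞ω} {U : Set V}
    {F : V → X →L[𝕜] Y} (hF : ContDiffOn 𝕜 n F U) (hinv : ∀ v ∈ U, (F v).IsInvertible) (y : Y) :
    ContDiffOn 𝕜 n (fun v => (F v).inverse y) U := fun v hv =>
  ((hinv v hv).contDiffAt_map_inverse.comp_contDiffWithinAt v (hF v hv)).clm_apply
    contDiffWithinAt_const

variable {R S X Y : Type*} [Semiring R] [Semiring S] [TopologicalSpace X] [AddCommMonoid X]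
  [Module R X] [Module S X] [TopologicalSpace Y] [AddCommMonoid Y] [Module R Y] [Module S Y]
  [LinearMap.CompatibleSMul X Y R S] [LinearMap.CompatibleSMul Y X R S] {f : X →L[S] Y}

theorem isInvertible_restrictScalars (hf : f.IsInvertible) :
    (f.restrictScalars R).IsInvertible := by
  refine .of_inverse (g := f.inverse.restrictScalars R) ?_ ?_
  · ext y; simp [hf.self_apply_inverse]
  · ext y; simp [hf.inverse_apply_self]

theorem inverse_restrictScalars (hf : f.IsInvertible) :
    (f.restrictScalars R).inverse = f.inverse.restrictScalars R :=
  ContinuousLinearMap.inverse_eq (by ext y; simp [hf.self_apply_inverse])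
    (by ext y; simp [hf.inverse_apply_self])

end Inverse

theorem stmt0_general {𝕜 𝕂 V X Y : Type*} [RCLike 𝕜] [NontriviallyNormedField 𝕂]
    [NormedAlgebra 𝕜 𝕂] [NormedAddCommGroup V] [NormedSpace 𝕜 V]
    [NormedAddCommGroup X] [NormedSpace 𝕜 X] [NormedSpace 𝕂 X] [IsScalarTower 𝕜 𝕂 X]
    [CompleteSpace X]
    [NormedAddCommGroup Y] [NormedSpace 𝕜 Y] [NormedSpace 𝕂 Y] [IsScalarTower 𝕜 𝕂 Y]
    [CompleteSpace Y] {U : Set V} (hU : IsOpen U) {F : V → X →L[𝕂] Y}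
    (hF : ∀ x, ContDiffOn 𝕜 ∞ (fun v => F v x) U) (hbij : ∀ v ∈ U, Function.Bijective (F v)) :
    ∃ G : V → Y →L[𝕂] X,
      (∀ v ∈ U, Function.LeftInverse (G v) (F v) ∧ Function.RightInverse (G v) (F v)) ∧
      ∀ y, ContDiffOn 𝕜 ∞ (fun v => G v y) U := by
  have hinv : ∀ v ∈ U, (F v).IsInvertible := fun v hv =>
    ⟨.ofBijective (F v) (LinearMap.ker_eq_bot.2 (hbij v hv).1)
      (LinearMap.range_eq_top.2 (hbij v hv).2), ContinuousLinearEquiv.coe_ofBijective ..⟩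
  have hF_norm : ContDiffOn 𝕜 ∞ (fun v => (F v).restrictScalars 𝕜) U :=
    contDiffOn_infty.2 fun n => contDiffOn_of_forall_contDiffOn_succ_apply hU n fun x =>
      contDiffOn_infty.1 (hF x) (n + 1)
  refine ⟨fun v => (F v).inverse, fun v hv =>
    ⟨(hinv v hv).inverse_apply_self, (hinv v hv).self_apply_inverse⟩, fun y => ?_⟩
  refine (contDiffOn_inverse_apply hF_norm (fun v hv => isInvertible_restrictScalars (hinv v hv))
    y).congr fun v hv => ?_
  rw [inverse_restrictScalars (hinv v hv), ContinuousLinearMap.coe_restrictScalars']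

/-- Let `X` be a Banach space (over `ℂ`), `J ⊆ ℝ` a nonempty open interval, and
`{F_t : X → X}` a family of continuous linear maps such that `t ↦ F_t x` is smooth on `J`
for every `x`.  If each `F_t` (for `t ∈ J`) is bijective, then the pointwise inverse family
is again a family of continuous linear maps depending smoothly on `t ∈ J`. -/
theorem stmt0 {X : Type*} [NormedAddCommGroup X] [NormedSpace ℂ X] [CompleteSpace X]
    (J : Set ℝ) (hJopen : IsOpen J) (hJconn : J.OrdConnected) (hJne : J.Nonempty)
    (F : ℝ → X →L[ℂ] X)
    (hsmooth : ∀ x : X, ContDiffOn ℝ (⊤ : ℕ∞) (fun t => F t x) J)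
    (hbij : ∀ t ∈ J, Function.Bijective (F t)) :
    ∃ G : ℝ → X →L[ℂ] X,
      (∀ t ∈ J, ∀ x : X, G t (F t x) = x ∧ F t (G t x) = x) ∧
      (∀ x : X, ContDiffOn ℝ (⊤ : ℕ∞) (fun t => G t x) J) := by
  obtain ⟨G, hG, hG_smooth⟩ := stmt0_general hJopen hsmooth hbij
  exact ⟨G, fun t ht x => ⟨(hG t ht).1 x, (hG t ht).2 x⟩, hG_smooth⟩
end

section
/- Let X be a Banach space and J an open real interval. For every family {F_t}_{t∈J} of continuous linear operators on X depending smoothly on t (in the sense that t ↦ F_t(x) is smooth for each x, with locally uniform control), and for every s ∈ J and x₀ ∈ X, the linear ODE x'(t) = F_t(x(t)) with x(s) = x₀ has a unique smooth solution x : J → X, given by the convergent series x(t) = x₀ + Σ_{n≥1} ∫_s^t ∫_s^{u₁} ⋯ ∫_s^{u_{n-1}} (F_{u₁} ∘ ⋯ ∘ F_{u_n})(x₀) du_n ⋯ du₁. -/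
open intervalIntegral

/-- The iterated Picard integrals: `picard F s x₀ n t` is the `n`-fold iterated integral
`∫_s^t ∫_s^{u₁} ⋯ ∫_s^{u_{n-1}} (F_{u₁} ∘ ⋯ ∘ F_{u_n}) x₀ du_n ⋯ du₁`
(with `picard F s x₀ 0 t = x₀`). -/
noncomputable def picard {X : Type*} [NormedAddCommGroup X] [NormedSpace ℝ X]
    (F : ℝ → X →L[ℝ] X) (s : ℝ) (x₀ : X) : ℕ → ℝ → X
  | 0 => fun _ => x₀
  | (n + 1) => fun t => ∫ u in s..t, F u (picard F s x₀ n u)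

/-!
Let `g (n + 1) t = ∫ u in s..t, F u (g n u)` on a compact interval `K ∋ s` with `‖F‖ ≤ C` and
`‖g 0‖ ≤ M` there. By induction `‖g n t‖ ≤ M (C |t - s|)ⁿ / n!`. For `g n = picard F s x₀ n` the
series therefore converges uniformly on `K`; integrating it termwise shifts the index by one, so
its sum `x` satisfies `x t = x₀ + ∫ u in s..t, F u (x u)`. For the constant sequence `g n = z`, with
`z` the difference of two solutions, the same bound forces `z = 0`. Regularity is bootstrapped from
`x' = F x`. The estimates pass from `K` to an arbitrary interval `J` because every point of `J` has
a compact interval containing `s` as a neighbourhood within `J`.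
-/

open Set Filter Topology MeasureTheory
open scoped Nat

section OrderTopology

variable {α : Type*} [LinearOrder α] [TopologicalSpace α] [OrderClosedTopology α] {J : Set α}

theorem exists_mem_le_Ici_mem_nhdsWithin {r t : α} (hr : r ∈ J) (hrt : r ≤ t) :
    ∃ a ∈ J, a ≤ r ∧ Ici a ∈ 𝓝[J] t := by
  by_cases h : ∃ a ∈ J, a < r
  · obtain ⟨a, ha, har⟩ := h
    exact ⟨a, ha, har.le, mem_nhdsWithin_of_mem_nhds (Ici_mem_nhds (har.trans_le hrt))⟩
  · push Not at h
    exact ⟨r, hr, le_rfl, mem_of_superset self_mem_nhdsWithin h⟩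

theorem exists_Icc_mem_nhdsWithin_of_ordConnected (hJ : J.OrdConnected) {s t : α} (hs : s ∈ J)
    (ht : t ∈ J) : ∃ a b, Icc a b ⊆ J ∧ s ∈ Icc a b ∧ t ∈ Icc a b ∧ Icc a b ∈ 𝓝[J] t := by
  have hmin : min s t ∈ J := hJ.uIcc_subset hs ht ⟨le_rfl, inf_le_sup⟩
  have hmax : max s t ∈ J := hJ.uIcc_subset hs ht ⟨inf_le_sup, le_rfl⟩
  obtain ⟨a, ha, ha_le, hIci⟩ := exists_mem_le_Ici_mem_nhdsWithin hmin (min_le_right s t)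
  obtain ⟨b, hb, le_hb, hIic⟩ :=
    exists_mem_le_Ici_mem_nhdsWithin (α := αᵒᵈ) hmax (le_max_right s t)
  exact ⟨a, b, hJ.out ha hb, ⟨(le_min_iff.1 ha_le).1, (max_le_iff.1 le_hb).1⟩,
    ⟨(le_min_iff.1 ha_le).2, (max_le_iff.1 le_hb).2⟩, inter_mem hIci hIic⟩

end OrderTopology

theorem hasDerivWithinAt_integral_of_ordConnected {E : Type*} [NormedAddCommGroup E]
    [NormedSpace ℝ E] [CompleteSpace E] {J : Set ℝ} (hJ : J.OrdConnected) {f : ℝ → E}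
    (hf : ContinuousOn f J) {s t : ℝ} (hs : s ∈ J) (ht : t ∈ J) :
    HasDerivWithinAt (fun t ↦ ∫ u in s..t, f u) (f t) J t := by
  obtain ⟨a, b, hK, -, htK, hK_nhds⟩ := exists_Icc_mem_nhdsWithin_of_ordConnected hJ hs ht
  have : Fact (t ∈ Icc a b) := ⟨htK⟩
  have hfK : ContinuousOn f (Icc a b) := hf.mono hK
  exact (intervalIntegral.integral_hasDerivWithinAt_right
    (hf.mono (hJ.uIcc_subset hs ht)).intervalIntegrable
    (hfK.stronglyMeasurableAtFilter_nhdsWithin measurableSet_Icc t)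
    (hfK t htK)).mono_of_mem_nhdsWithin hK_nhds

theorem integral_eq_sub_of_hasDerivWithinAt {E : Type*} [NormedAddCommGroup E]
    [NormedSpace ℝ E] [CompleteSpace E] {f f' : ℝ → E} {a b : ℝ}
    (hf : ∀ u ∈ uIcc a b, HasDerivWithinAt f (f' u) (uIcc a b) u)
    (hf' : IntervalIntegrable f' volume a b) : ∫ u in a..b, f' u = f b - f a :=
  intervalIntegral.integral_eq_sub_of_hasDeriv_right (HasDerivWithinAt.continuousOn hf)
    (fun u hu ↦ ((hf u (Ioo_subset_Icc_self hu)).hasDerivAt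
      (Icc_mem_nhds hu.1 hu.2)).hasDerivWithinAt) hf'

theorem abs_integral_abs_sub_pow (s t : ℝ) (n : ℕ) :
    |∫ u in s..t, |u - s| ^ n| = |t - s| ^ (n + 1) / (n + 1) := by
  rw [intervalIntegral.abs_intervalIntegral_eq, integral_pow_abs_sub_uIoc,
    abs_of_nonneg (by positivity)]

section Regularity

variable {𝕜 : Type*} [NontriviallyNormedField 𝕜] {E : Type*} [NormedAddCommGroup E]
  [NormedSpace 𝕜 E] {J : Set 𝕜}

theorem contDiffOn_succ_of_hasDerivWithinAt {n : ℕ} {f f' : 𝕜 → E}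
    (hf : ∀ t ∈ J, HasDerivWithinAt f (f' t) J t) (hf' : ContDiffOn 𝕜 n f' J) :
    ContDiffOn 𝕜 (n + 1) f J := by
  refine (contDiffOn_succ_iff_hasFDerivWithinAt (by simp)).2 fun t ht ↦
    ⟨J, by simpa only [insert_eq_of_mem ht] using self_mem_nhdsWithin, by simp,
      fun u ↦ ContinuousLinearMap.toSpanSingleton 𝕜 (f' u),
      fun u hu ↦ (hf u hu).hasFDerivWithinAt, ?_⟩
  exact (ContinuousLinearMap.toSpanSingletonCLE (𝕜 := 𝕜) (E := E)).contDiff.comp_contDiffOn hf'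

theorem contDiffOn_add_one_of_hasDerivWithinAt_clm_apply {n : ℕ∞} {F : 𝕜 → E →L[𝕜] E}
    {y : 𝕜 → E} (hF : ContDiffOn 𝕜 n F J) (hy : ∀ t ∈ J, HasDerivWithinAt y (F t (y t)) J t) :
    ContDiffOn 𝕜 (n + 1) y J := by
  refine contDiffOn_iff_forall_nat_le (n := n + 1).2 fun m hm ↦ ?_
  induction m with
  | zero => exact contDiffOn_zero.2 (HasDerivWithinAt.continuousOn hy)
  | succ m ih =>
    have hmn : (m : ℕ∞) ≤ n := by simpa using hm
    have hym : ContDiffOn 𝕜 m y J := ih (hmn.trans le_self_add)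
    exact contDiffOn_succ_of_hasDerivWithinAt hy
      ((hF.of_le (mod_cast hmn)).clm_apply hym)

end Regularity

section LinearODE

variable {X : Type*} [NormedAddCommGroup X] [NormedSpace ℝ X] {F : ℝ → X →L[ℝ] X}
  {J K : Set ℝ} {s t : ℝ}

section VolterraIteration

variable {C M : ℝ} {g : ℕ → ℝ → X}

theorem norm_integral_clm_apply_le (hM : 0 ≤ M) (hF : ∀ u ∈ uIcc s t, ‖F u‖ ≤ C)
    {f : ℝ → X} {n : ℕ} (hf : ∀ u ∈ uIcc s t, ‖f u‖ ≤ M * ((C * |u - s|) ^ n / n !)) :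
    ‖∫ u in s..t, F u (f u)‖ ≤ M * ((C * |t - s|) ^ (n + 1) / (n + 1)!) := by
  have hC : 0 ≤ C := (norm_nonneg _).trans (hF s left_mem_uIcc)
  have hbound : ∀ u ∈ uIcc s t, ‖F u (f u)‖ ≤ M * (C ^ (n + 1) / n !) * |u - s| ^ n := fun u hu ↦
    calc ‖F u (f u)‖ ≤ C * (M * ((C * |u - s|) ^ n / n !)) :=
          (F u).le_of_opNorm_le_of_le (hF u hu) (hf u hu)
      _ = M * (C ^ (n + 1) / n !) * |u - s| ^ n := by ring
  calc ‖∫ u in s..t, F u (f u)‖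
      ≤ |∫ u in s..t, M * (C ^ (n + 1) / n !) * |u - s| ^ n| :=
        intervalIntegral.norm_integral_le_abs_of_norm_le
          ((ae_restrict_mem measurableSet_uIoc).mono fun u hu ↦ hbound u (uIoc_subset_uIcc hu))
          (Continuous.intervalIntegrable (by fun_prop) s t)
    _ = M * (C ^ (n + 1) / n !) * (|t - s| ^ (n + 1) / (n + 1)) := by
        rw [intervalIntegral.integral_const_mul, abs_mul, abs_integral_abs_sub_pow,
          abs_of_nonneg (by positivity)]
    _ = M * ((C * |t - s|) ^ (n + 1) / (n + 1)!) := by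
        rw [Nat.factorial_succ, mul_pow]
        push_cast
        field_simp

theorem norm_le_of_eq_integral_clm_apply (hK : K.OrdConnected) (hs : s ∈ K)
    (hF : ∀ t ∈ K, ‖F t‖ ≤ C) (hg : ∀ n, ∀ t ∈ K, g (n + 1) t = ∫ u in s..t, F u (g n u))
    (hM : ∀ t ∈ K, ‖g 0 t‖ ≤ M) (n : ℕ) (ht : t ∈ K) :
    ‖g n t‖ ≤ M * ((C * |t - s|) ^ n / n !) := by
  induction n generalizing t with
  | zero => simpa using hM t ht
  | succ n ih =>
    have hst : uIcc s t ⊆ K := hK.uIcc_subset hs ht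
    have hM₀ : 0 ≤ M := (norm_nonneg _).trans (hM s hs)
    rw [hg n t ht]
    exact norm_integral_clm_apply_le hM₀ (fun u hu ↦ hF u (hst hu)) fun u hu ↦ ih (hst hu)

theorem exists_summable_norm_le_of_eq_integral_clm_apply (hKc : IsCompact K)
    (hK : K.OrdConnected) (hs : s ∈ K) (hF : ContinuousOn F K)
    (hg : ∀ n, ∀ t ∈ K, g (n + 1) t = ∫ u in s..t, F u (g n u)) (hg₀ : ContinuousOn (g 0) K) :
    ∃ b : ℕ → ℝ, Summable b ∧ ∀ n, ∀ t ∈ K, ‖g n t‖ ≤ b n := by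
  obtain ⟨C, hC⟩ := hKc.exists_bound_of_continuousOn hF
  obtain ⟨M, hM⟩ := hKc.exists_bound_of_continuousOn hg₀
  have hC₀ : 0 ≤ C := (norm_nonneg _).trans (hC s hs)
  have hM₀ : 0 ≤ M := (norm_nonneg _).trans (hM s hs)
  refine ⟨fun n ↦ M * ((C * Metric.diam K) ^ n / n !),
    (Real.summable_pow_div_factorial _).mul_left M, fun n t ht ↦ ?_⟩
  have hdiam : |t - s| ≤ Metric.diam K := Metric.dist_le_diam_of_mem hKc.isBounded ht hs
  calc ‖g n t‖ ≤ M * ((C * |t - s|) ^ n / n !) :=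
        norm_le_of_eq_integral_clm_apply hK hs hC hg hM n ht
    _ ≤ M * ((C * Metric.diam K) ^ n / n !) := by gcongr

end VolterraIteration

theorem eqOn_of_hasDerivWithinAt_clm_apply [CompleteSpace X] (hJ : J.OrdConnected)
    (hF : ContinuousOn F J) (hs : s ∈ J) {x y : ℝ → X}
    (hx : ∀ t ∈ J, HasDerivWithinAt x (F t (x t)) J t)
    (hy : ∀ t ∈ J, HasDerivWithinAt y (F t (y t)) J t) (hxy : x s = y s) : EqOn x y J := by
  intro t ht
  have hK : uIcc s t ⊆ J := hJ.uIcc_subset hs ht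
  have hFK : ContinuousOn F (uIcc s t) := hF.mono hK
  set z : ℝ → X := fun u ↦ x u - y u
  have hz : ∀ u ∈ uIcc s t, HasDerivWithinAt z (F u (z u)) (uIcc s t) u := fun u hu ↦ by
    simpa only [z, map_sub] using ((hx u (hK hu)).fun_sub (hy u (hK hu))).mono hK
  have hz_cont : ContinuousOn z (uIcc s t) := HasDerivWithinAt.continuousOn hz
  have hz_int : ∀ r ∈ uIcc s t, z r = ∫ u in s..r, F u (z u) := fun r hr ↦ by
    have hsub : uIcc s r ⊆ uIcc s t := uIcc_subset_uIcc_left hr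
    rw [integral_eq_sub_of_hasDerivWithinAt (fun u hu ↦ (hz u (hsub hu)).mono hsub)
      ((hFK.clm_apply hz_cont).mono hsub).intervalIntegrable]
    simp [z, hxy]
  obtain ⟨b, hb, hzb⟩ := exists_summable_norm_le_of_eq_integral_clm_apply (g := fun _ ↦ z)
    isCompact_uIcc ordConnected_uIcc left_mem_uIcc hFK (fun _ ↦ hz_int) hz_cont
  have hzt : ‖z t‖ ≤ 0 :=
    ge_of_tendsto' hb.tendsto_atTop_zero fun n ↦ hzb n t right_mem_uIcc
  exact sub_eq_zero.1 (norm_le_zero_iff.1 hzt)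

/-- The Peano–Baker series of `F` based at `s` applied to `x₀`, i.e. the sum of the iterated
integrals `picard F s x₀ n`. It has the junk value `0` at points where the series diverges. -/
noncomputable def peanoBaker (F : ℝ → X →L[ℝ] X) (s : ℝ) (x₀ : X) (t : ℝ) : X :=
  ∑' n, picard F s x₀ n t

section PeanoBaker

theorem peanoBaker_self (F : ℝ → X →L[ℝ] X) (s : ℝ) (x₀ : X) : peanoBaker F s x₀ s = x₀ := by
  have hsucc : ∀ n ≠ 0, picard F s x₀ n s = 0
    | n + 1, _ => intervalIntegral.integral_same
  exact tsum_eq_single 0 hsucc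

theorem exists_summable_norm_picard_le (hKc : IsCompact K) (hK : K.OrdConnected) (hs : s ∈ K)
    (hF : ContinuousOn F K) (x₀ : X) :
    ∃ b : ℕ → ℝ, Summable b ∧ ∀ n, ∀ t ∈ K, ‖picard F s x₀ n t‖ ≤ b n :=
  exists_summable_norm_le_of_eq_integral_clm_apply (g := picard F s x₀) hKc hK hs hF
    (fun _ _ _ ↦ rfl) continuousOn_const

variable [CompleteSpace X] (hJ : J.OrdConnected) (hF : ContinuousOn F J) (hs : s ∈ J) (x₀ : X)
include hJ hF hs

theorem continuousOn_picard (n : ℕ) : ContinuousOn (picard F s x₀ n) J := by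
  induction n with
  | zero => exact continuousOn_const
  | succ n ih =>
    exact fun t ht ↦
      (hasDerivWithinAt_integral_of_ordConnected hJ (hF.clm_apply ih) hs ht).continuousWithinAt

theorem hasSum_picard (ht : t ∈ J) :
    HasSum (fun n ↦ picard F s x₀ n t) (peanoBaker F s x₀ t) := by
  obtain ⟨b, hb, hle⟩ := exists_summable_norm_picard_le isCompact_uIcc ordConnected_uIcc
    (left_mem_uIcc (a := s) (b := t)) (hF.mono (hJ.uIcc_subset hs ht)) x₀
  exact (Summable.of_norm_bounded hb fun n ↦ hle n t right_mem_uIcc).hasSum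

theorem continuousOn_peanoBaker : ContinuousOn (peanoBaker F s x₀) J := by
  intro t ht
  obtain ⟨a, b, hKJ, hsK, htK, hK⟩ := exists_Icc_mem_nhdsWithin_of_ordConnected hJ hs ht
  obtain ⟨u, hu, hle⟩ :=
    exists_summable_norm_picard_le isCompact_Icc ordConnected_Icc hsK (hF.mono hKJ) x₀
  have hcont : ContinuousOn (peanoBaker F s x₀) (Icc a b) :=
    continuousOn_tsum (fun n ↦ (continuousOn_picard hJ hF hs x₀ n).mono hKJ) hu hle
  exact (hcont t htK).mono_of_mem_nhdsWithin hK

theorem peanoBaker_eq_add_integral (ht : t ∈ J) :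
    peanoBaker F s x₀ t = x₀ + ∫ u in s..t, F u (peanoBaker F s x₀ u) := by
  have hK : uIcc s t ⊆ J := hJ.uIcc_subset hs ht
  obtain ⟨C, hC⟩ := isCompact_uIcc.exists_bound_of_continuousOn (hF.mono hK)
  obtain ⟨b, hb, hle⟩ := exists_summable_norm_picard_le isCompact_uIcc ordConnected_uIcc
    (left_mem_uIcc (a := s) (b := t)) (hF.mono hK) x₀
  have hterm (n : ℕ) : ContinuousOn (fun u ↦ F u (picard F s x₀ n u)) (uIcc s t) :=
    (hF.clm_apply (continuousOn_picard hJ hF hs x₀ n)).mono hK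
  have hint : HasSum (fun n ↦ picard F s x₀ (n + 1) t)
      (∫ u in s..t, F u (peanoBaker F s x₀ u)) :=
    intervalIntegral.hasSum_integral_of_dominated_convergence (fun n _ ↦ C * b n)
      (fun n ↦ ((hterm n).mono uIoc_subset_uIcc).aestronglyMeasurable measurableSet_uIoc)
      (fun n ↦ .of_forall fun u hu ↦ (F u).le_of_opNorm_le_of_le
        (hC u (uIoc_subset_uIcc hu)) (hle n u (uIoc_subset_uIcc hu)))
      (.of_forall fun _ _ ↦ hb.mul_left C) intervalIntegrable_const
      (.of_forall fun u hu ↦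
        (F u).hasSum (hasSum_picard hJ hF hs x₀ (hK (uIoc_subset_uIcc hu))))
  calc peanoBaker F s x₀ t = picard F s x₀ 0 t + ∑' n, picard F s x₀ (n + 1) t :=
        (hasSum_picard hJ hF hs x₀ ht).summable.tsum_eq_zero_add
    _ = x₀ + ∫ u in s..t, F u (peanoBaker F s x₀ u) := by rw [hint.tsum_eq, picard]

theorem hasDerivWithinAt_peanoBaker (ht : t ∈ J) :
    HasDerivWithinAt (peanoBaker F s x₀) (F t (peanoBaker F s x₀ t)) J t := by
  have hcont : ContinuousOn (fun u ↦ F u (peanoBaker F s x₀ u)) J :=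
    hF.clm_apply (continuousOn_peanoBaker hJ hF hs x₀)
  exact ((hasDerivWithinAt_integral_of_ordConnected hJ hcont hs ht).const_add x₀).congr_of_mem
    (fun u hu ↦ peanoBaker_eq_add_integral hJ hF hs x₀ hu) ht

end PeanoBaker

theorem stmt2_general [CompleteSpace X] (hJ : J.OrdConnected) {n : ℕ∞}
    (hF : ContDiffOn ℝ n F J) (hs : s ∈ J) (x₀ : X) :
    ∃ x : ℝ → X,
      (ContDiffOn ℝ (n + 1) x J ∧ x s = x₀ ∧ ∀ t ∈ J, HasDerivWithinAt x (F t (x t)) J t) ∧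
      (∀ y : ℝ → X, y s = x₀ → (∀ t ∈ J, HasDerivWithinAt y (F t (y t)) J t) → EqOn y x J) ∧
      ∀ t ∈ J, HasSum (fun n ↦ picard F s x₀ n t) (x t) := by
  have hFc : ContinuousOn F J := hF.continuousOn
  have hderiv : ∀ t ∈ J, HasDerivWithinAt (peanoBaker F s x₀) (F t (peanoBaker F s x₀ t)) J t :=
    fun t ht ↦ hasDerivWithinAt_peanoBaker hJ hFc hs x₀ ht
  have hself : peanoBaker F s x₀ s = x₀ := peanoBaker_self F s x₀
  exact ⟨peanoBaker F s x₀,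
    ⟨contDiffOn_add_one_of_hasDerivWithinAt_clm_apply hF hderiv, hself, hderiv⟩,
    fun y hys hy ↦ eqOn_of_hasDerivWithinAt_clm_apply hJ hFc hs hy hderiv (hys.trans hself.symm),
    fun t ht ↦ hasSum_picard hJ hFc hs x₀ ht⟩

end LinearODE

/-- Let `X` be a Banach space, `J` an open interval.  For every smooth family
`{F_t}` of continuous linear operators on `X` and every `s ∈ J`, `x₀ ∈ X`, the linear ODE
`x'(t) = F_t (x t)`, `x s = x₀` has a smooth solution on `J`, unique on `J`, and given on `J`
by the convergent series of iterated integrals `x t = Σ_n picard F s x₀ n t`. -/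
theorem stmt2 {X : Type*} [NormedAddCommGroup X] [NormedSpace ℝ X] [CompleteSpace X]
    (J : Set ℝ) (hJopen : IsOpen J) (hJconn : J.OrdConnected) (hJne : J.Nonempty)
    (F : ℝ → X →L[ℝ] X)
    (hFsmooth : ContDiffOn ℝ (⊤ : ℕ∞) (fun t => F t) J)
    (s : ℝ) (hs : s ∈ J) (x₀ : X) :
    ∃ x : ℝ → X,
      (ContDiffOn ℝ (⊤ : ℕ∞) x J ∧ x s = x₀ ∧ ∀ t ∈ J, HasDerivWithinAt x (F t (x t)) J t) ∧
      (∀ y : ℝ → X,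
        (ContDiffOn ℝ (⊤ : ℕ∞) y J ∧ y s = x₀ ∧ ∀ t ∈ J, HasDerivWithinAt y (F t (y t)) J t) →
        ∀ t ∈ J, y t = x t) ∧
      (∀ t ∈ J, HasSum (fun n => picard F s x₀ n t) (x t)) := by
  obtain ⟨x, ⟨hx, hxs, hderiv⟩, huniq, hsum⟩ := stmt2_general hJconn hFsmooth hs x₀
  exact ⟨x, ⟨hx, hxs, hderiv⟩, fun y ⟨_, hys, hy⟩ ↦ huniq y hys hy, hsum⟩
end

section
/- Let A be a Banach algebra whose Hochschild cochain complex C^•(A,A) admits a continuous linear contracting homotopy h in degree 2 (δh + hδ = 1 on C²(A,A)). Then A is smoothly rigid: every smooth one-parameter deformation {A_t}_{t∈J} of Banach algebra structures on the underlying Banach space of A with A₀ = A is trivial on some subinterval J' ∋ 0, i.e. there are algebra isomorphisms A_t ≅ A depending smoothly on t ∈ J'. -/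
open Set

/-!
Write `δ_t` for the Hochschild coboundary of the multiplication `m t`. Differentiating associativity
shows that `ṁ_t` is a `δ_t`-cocycle, and since `P_t = δ_t h₂ + h₃ δ_t` is the identity at `t = 0`,
it is invertible for small `t`. On cocycles `P_t = δ_t h₂`, so `X_t = -h₂ (P_t⁻¹ ṁ_t)` satisfies
`δ_t X_t = -ṁ_t` and is as smooth in `t` as `ṁ_t`. As in Moser's path method, the flow `G` of the
linear equation `G' = X G`, `G 0 = 1`, then carries `m 0` to `m t`: both `m_t (G_t a) (G_t b)` and
`G_t (m₀ a b)` solve `y' = X y` with the same initial value. The trivialization is `F_t = G_t⁻¹`.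
-/

open Filter Metric
open scoped NNReal Ring Topology

section HochschildComplex

open ContinuousLinearMap (compL)

set_option maxSynthPendingDepth 3

variable {𝕜 A : Type*} [NontriviallyNormedField 𝕜] [NormedAddCommGroup A] [NormedSpace 𝕜 A]

variable (𝕜 A) in
/-- The Gerstenhaber composition `(Φ ∘ Ψ) a b c = Φ (Ψ a b) c - Φ a (Ψ b c)` of continuous
Hochschild 2-cochains, as a continuous bilinear map. A multiplication `m` is associative exactly
when `m ∘ m = 0`. -/
noncomputable def gerstenhaberComp :
    (A →L[𝕜] A →L[𝕜] A) →L[𝕜] (A →L[𝕜] A →L[𝕜] A) →L[𝕜] (A →L[𝕜] A →L[𝕜] A →L[𝕜] A) :=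
  compL 𝕜 A (A →L[𝕜] A) (A →L[𝕜] A →L[𝕜] A) ∘L compL 𝕜 A A (A →L[𝕜] A) -
    (compL 𝕜 A (A →L[𝕜] A) (A →L[𝕜] A →L[𝕜] A) ∘L
      (compL 𝕜 A (A →L[𝕜] A) (A →L[𝕜] A) ∘L compL 𝕜 A A A).flip).flip

variable (𝕜 A) in
/-- The Hochschild coboundary `C¹(A,A) → C²(A,A)` of a multiplication on `A`. It is bundled as a
continuous linear function of the multiplication, so that it can be followed along a deformation. -/
noncomputable def hochschildD₁₂ :
    (A →L[𝕜] A →L[𝕜] A) →L[𝕜] (A →L[𝕜] A) →L[𝕜] (A →L[𝕜] A →L[𝕜] A) :=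
  (compL 𝕜 A (A →L[𝕜] A) (A →L[𝕜] A) ∘L (compL 𝕜 A A A).flip).flip -
    (compL 𝕜 A (A →L[𝕜] A) (A →L[𝕜] A) ∘L compL 𝕜 A A A).flip +
    compL 𝕜 A A (A →L[𝕜] A)

variable (𝕜 A) in
/-- The Hochschild coboundary `C²(A,A) → C³(A,A)` of a multiplication on `A`, as a continuous
linear function of the multiplication. Up to sign it is the Gerstenhaber bracket with the
multiplication. -/
noncomputable def hochschildD₂₃ :
    (A →L[𝕜] A →L[𝕜] A) →L[𝕜] (A →L[𝕜] A →L[𝕜] A) →L[𝕜] (A →L[𝕜] A →L[𝕜] A →L[𝕜] A) :=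
  -(gerstenhaberComp 𝕜 A + (gerstenhaberComp 𝕜 A).flip)

theorem gerstenhaberComp_apply (Φ Ψ : A →L[𝕜] A →L[𝕜] A) (a b c : A) :
    gerstenhaberComp 𝕜 A Φ Ψ a b c = Φ (Ψ a b) c - Φ a (Ψ b c) := by
  simp [gerstenhaberComp]

theorem gerstenhaberComp_self_eq_zero {m : A →L[𝕜] A →L[𝕜] A}
    (hm : ∀ a b c, m (m a b) c = m a (m b c)) : gerstenhaberComp 𝕜 A m m = 0 := by
  ext a b c
  simp [gerstenhaberComp_apply, hm]

theorem hochschildD₁₂_apply (m : A →L[𝕜] A →L[𝕜] A) (ξ : A →L[𝕜] A) (a b : A) :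
    hochschildD₁₂ 𝕜 A m ξ a b = m a (ξ b) - ξ (m a b) + m (ξ a) b := by
  simp [hochschildD₁₂]

theorem hochschildD₂₃_apply (m Φ : A →L[𝕜] A →L[𝕜] A) (a b c : A) :
    hochschildD₂₃ 𝕜 A m Φ a b c = m a (Φ b c) - Φ (m a b) c + Φ a (m b c) - m (Φ a b) c := by
  simp only [hochschildD₂₃, gerstenhaberComp_apply, neg_apply, add_apply,
    ContinuousLinearMap.flip_apply]
  abel

theorem hochschildD₂₃_comp_hochschildD₁₂ {m : A →L[𝕜] A →L[𝕜] A}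
    (hm : ∀ a b c, m (m a b) c = m a (m b c)) :
    hochschildD₂₃ 𝕜 A m ∘L hochschildD₁₂ 𝕜 A m = 0 := by
  ext ξ a b c
  simp only [ContinuousLinearMap.comp_apply, hochschildD₂₃_apply, hochschildD₁₂_apply, map_add,
    map_sub, add_apply, sub_apply, zero_apply, hm]
  abel

theorem hochschildD₂₃_eq_zero_of_hasDerivAt {m : 𝕜 → A →L[𝕜] A →L[𝕜] A} {m' : A →L[𝕜] A →L[𝕜] A}
    {t : 𝕜} (hm : HasDerivAt m m' t)
    (hassoc : ∀ᶠ s in 𝓝 t, ∀ a b c, m s (m s a b) c = m s a (m s b c)) :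
    hochschildD₂₃ 𝕜 A (m t) m' = 0 := by
  have hderiv : HasDerivAt (fun s => gerstenhaberComp 𝕜 A (m s) (m s))
      (gerstenhaberComp 𝕜 A m' (m t) + gerstenhaberComp 𝕜 A (m t) m') t :=
    ((gerstenhaberComp 𝕜 A).hasFDerivAt.comp_hasDerivAt t hm).clm_apply hm
  have hzero : (fun s => gerstenhaberComp 𝕜 A (m s) (m s)) =ᶠ[𝓝 t] fun _ => 0 :=
    hassoc.mono fun s hs => gerstenhaberComp_self_eq_zero hs
  have hsum := hderiv.unique ((hasDerivAt_const t 0).congr_of_eventuallyEq hzero)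
  rw [hochschildD₂₃, neg_apply, neg_apply, add_apply, add_apply, ContinuousLinearMap.flip_apply,
    add_comm, hsum, neg_zero]

end HochschildComplex

section Homotopy

variable {𝕜 E F G : Type*} [NontriviallyNormedField 𝕜] [NormedAddCommGroup E] [NormedSpace 𝕜 E]
  [NormedAddCommGroup F] [NormedSpace 𝕜 F] [CompleteSpace F]
  [NormedAddCommGroup G] [NormedSpace 𝕜 G]

theorem ringInverse_apply_mem_of_isClosed {P : F →L[𝕜] F} (hP : ‖1 - P‖ < 1) {Z : Submodule 𝕜 F}
    (hZ : IsClosed (Z : Set F)) (hPZ : ∀ z ∈ Z, P z ∈ Z) {z : F} (hz : z ∈ Z) :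
    P⁻¹ʳ z ∈ Z := by
  have hseries : HasSum (fun n : ℕ => ((1 - P) ^ n) z) (P⁻¹ʳ z) := by
    have h := hasSum_geom_series_inverse (1 - P) hP
    rw [sub_sub_cancel] at h
    exact (ContinuousLinearMap.apply 𝕜 F z).hasSum h
  have hterm (n : ℕ) : ((1 - P) ^ n) z ∈ Z := by
    induction n with
    | zero => exact hz
    | succ n ih =>
      rw [pow_succ']
      exact Z.sub_mem ih (hPZ _ ih)
  exact hZ.mem_of_tendsto hseries (.of_forall fun s => Z.sum_mem fun n _ => hterm n)

theorem apply_homotopy_ringInverse_eq {d₁ : E →L[𝕜] F} {d₂ : F →L[𝕜] G} (hd : d₂ ∘L d₁ = 0)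
    {h₂ : F →L[𝕜] E} {h₃ : G →L[𝕜] F} (hP : ‖1 - (d₁ ∘L h₂ + h₃ ∘L d₂)‖ < 1)
    {z : F} (hz : d₂ z = 0) : d₁ (h₂ ((d₁ ∘L h₂ + h₃ ∘L d₂)⁻¹ʳ z)) = z := by
  set P := d₁ ∘L h₂ + h₃ ∘L d₂ with hPdef
  have hPcocycle {w : F} (hw : d₂ w = 0) : P w = d₁ (h₂ w) := by simp [hPdef, hw]
  have hinv : d₂ (P⁻¹ʳ z) = 0 :=
    ringInverse_apply_mem_of_isClosed hP (Z := d₂.ker) d₂.isClosed_ker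
      (fun w (hw : d₂ w = 0) => by
        simpa [hPcocycle hw] using DFunLike.congr_fun hd (h₂ w)) hz
  have hunit : IsUnit P := by simpa using isUnit_one_sub_of_norm_lt_one hP
  calc d₁ (h₂ (P⁻¹ʳ z)) = P (P⁻¹ʳ z) := (hPcocycle hinv).symm
    _ = z := DFunLike.congr_fun (Ring.mul_inverse_cancel P hunit) z

theorem exists_contDiffAt_primitive {T : Type*} [NormedAddCommGroup T] [NormedSpace 𝕜 T]
    {n : WithTop ℕ∞} {t₀ : T} {d₁ : T → E →L[𝕜] F} {d₂ : T → F →L[𝕜] G} {z : T → F}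
    (h₂ : F →L[𝕜] E) (h₃ : G →L[𝕜] F) (hcontract : d₁ t₀ ∘L h₂ + h₃ ∘L d₂ t₀ = 1)
    (hd₁ : ∀ᶠ t in 𝓝 t₀, ContDiffAt 𝕜 n d₁ t) (hd₂ : ∀ᶠ t in 𝓝 t₀, ContDiffAt 𝕜 n d₂ t)
    (hz : ∀ᶠ t in 𝓝 t₀, ContDiffAt 𝕜 n z t) (hd : ∀ᶠ t in 𝓝 t₀, d₂ t ∘L d₁ t = 0)
    (hcocycle : ∀ᶠ t in 𝓝 t₀, d₂ t (z t) = 0) :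
    ∃ x : T → E, ∀ᶠ t in 𝓝 t₀, ContDiffAt 𝕜 n x t ∧ d₁ t (x t) = z t := by
  set P : T → F →L[𝕜] F := fun t => d₁ t ∘L h₂ + h₃ ∘L d₂ t with hPdef
  have hPsmooth : ∀ᶠ t in 𝓝 t₀, ContDiffAt 𝕜 n P t := by
    filter_upwards [hd₁, hd₂] with t h1 h2
    exact (h1.clm_comp contDiffAt_const).add (contDiffAt_const.clm_comp h2)
  have hPnear : ∀ᶠ t in 𝓝 t₀, ‖1 - P t‖ < 1 := by
    have hcont : ContinuousAt (fun t => ‖1 - P t‖) t₀ :=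
      (continuousAt_const.sub hPsmooth.self_of_nhds.continuousAt).norm
    exact hcont.eventually_lt continuousAt_const (by simp [hPdef, hcontract])
  refine ⟨fun t => h₂ ((P t)⁻¹ʳ (z t)), ?_⟩
  filter_upwards [hPsmooth, hPnear, hz, hd, hcocycle] with t hPt hnear hzt hdt hct
  have hunit : IsUnit (P t) := by simpa using isUnit_one_sub_of_norm_lt_one hnear
  have hinv : ContDiffAt 𝕜 n (fun s => (P s)⁻¹ʳ) t :=
    (hunit.unit_spec ▸ contDiffAt_ringInverse 𝕜 hunit.unit :
      ContDiffAt 𝕜 n Ring.inverse (P t)).comp t hPt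
  exact ⟨contDiffAt_const.clm_apply (hinv.clm_apply hzt),
    apply_homotopy_ringInverse_eq hdt hnear hct⟩

end Homotopy

section LinearODE

theorem contDiffOn_succ_of_hasDerivAt_clm_apply {𝕜 E : Type*} [NontriviallyNormedField 𝕜]
    [NormedAddCommGroup E] [NormedSpace 𝕜 E] {L : 𝕜 → E →L[𝕜] E} {x : 𝕜 → E} {s : Set 𝕜}
    {n : ℕ∞} (hs : IsOpen s) (hL : ContDiffOn 𝕜 n L s)
    (hx : ∀ t ∈ s, HasDerivAt x (L t (x t)) t) : ContDiffOn 𝕜 (n + 1) x s := by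
  have hsucc {k : ℕ∞} (hk : k ≤ n) (hxk : ContDiffOn 𝕜 k x s) : ContDiffOn 𝕜 (k + 1) x s := by
    refine (contDiffOn_succ_iff_deriv_of_isOpen hs).2
      ⟨fun t ht => (hx t ht).differentiableAt.differentiableWithinAt, by simp, ?_⟩
    exact ((hL.of_le (mod_cast hk)).clm_apply hxk).congr fun t ht => (hx t ht).deriv
  have hnat (k : ℕ) (hk : k ≤ n) : ContDiffOn 𝕜 k x s := by
    induction k with
    | zero => exact contDiffOn_zero.2 (HasDerivAt.continuousOn hx)
    | succ k ih =>
      have hk' : (k : ℕ∞) ≤ n := le_trans (mod_cast k.le_succ) hk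
      exact_mod_cast hsucc hk' (ih hk')
  exact hsucc le_rfl (contDiffOn_iff_forall_nat_le.2 fun k hk => hnat k hk)

variable {E : Type*} [NormedAddCommGroup E] [NormedSpace ℝ E]

theorem exists_eventually_hasDerivAt_clm_apply [CompleteSpace E] {L : ℝ → E →L[ℝ] E} {t₀ : ℝ}
    (hL : ∀ᶠ t in 𝓝 t₀, ContinuousAt L t) (x₀ : E) :
    ∃ x : ℝ → E, x t₀ = x₀ ∧ ∀ᶠ t in 𝓝 t₀, HasDerivAt x (L t (x t)) t := by
  set K : ℝ≥0 := ‖L t₀‖₊ + 1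
  have hbound : ∀ᶠ t in 𝓝 t₀, ‖L t‖₊ < K :=
    hL.self_of_nhds.nnnorm.eventually_lt continuousAt_const (lt_add_one _)
  obtain ⟨δ, hδ, hball⟩ := nhds_basis_closedBall.eventually_iff.1 (hL.and hbound)
  set M : ℝ≥0 := K * (‖x₀‖₊ + 1)
  have hM : 0 < M := by positivity
  set ε : ℝ := min δ (M : ℝ)⁻¹
  have hε : 0 < ε := lt_min hδ (by positivity)
  have hgood {t : ℝ} (ht : t ∈ Icc (t₀ - ε) (t₀ + ε)) : ContinuousAt L t ∧ ‖L t‖₊ < K :=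
    hball (closedBall_subset_closedBall (min_le_left _ _) (Real.closedBall_eq_Icc ▸ ht))
  have hpicard : IsPicardLindelof (fun t x => L t x) (tmin := t₀ - ε) (tmax := t₀ + ε)
      ⟨t₀, by simp [hε.le]⟩ x₀ 1 0 M K :=
    { lipschitzOnWith := fun t ht =>
        ((L t).lipschitz.weaken (hgood ht).2.le).lipschitzOnWith
      continuousOn := fun x _ t ht =>
        ((hgood ht).1.clm_apply continuousAt_const).continuousWithinAt
      norm_le := fun t ht x hx => by
        have hxnorm : ‖x‖ ≤ ‖x₀‖ + 1 := by
          simpa using norm_le_of_mem_closedBall hx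
        exact (L t).le_of_opNorm_le_of_le (hgood ht).2.le hxnorm
      mul_max_le := by
        have hMε : M * ε ≤ 1 :=
          (mul_le_mul_of_nonneg_left (min_le_right _ _) M.2).trans_eq
            (mul_inv_cancel₀ (NNReal.coe_pos.2 hM).ne')
        simpa using hMε }
  obtain ⟨x, hx₀, hx⟩ := hpicard.exists_eq_forall_mem_Icc_hasDerivWithinAt₀
  refine ⟨x, hx₀, ?_⟩
  filter_upwards [Ioo_mem_nhds (sub_lt_self t₀ hε) (lt_add_of_pos_right t₀ hε)] with t ht
  exact (hx t (Ioo_subset_Icc_self ht)).hasDerivAt (Icc_mem_nhds ht.1 ht.2)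

end LinearODE

section Moser

variable {A : Type*} [NormedAddCommGroup A] [NormedSpace ℝ A]

theorem hasDerivAt_mul_of_hochschildD₁₂_eq {m : ℝ → A →L[ℝ] A →L[ℝ] A}
    {m' : A →L[ℝ] A →L[ℝ] A} {X : A →L[ℝ] A} {x y : ℝ → A} {t : ℝ}
    (hm : HasDerivAt m m' t) (hX : hochschildD₁₂ ℝ A (m t) X = -m')
    (hx : HasDerivAt x (X (x t)) t) (hy : HasDerivAt y (X (y t)) t) :
    HasDerivAt (fun s => m s (x s) (y s)) (X (m t (x t) (y t))) t := by
  have hXxy : m t (x t) (X (y t)) - X (m t (x t) (y t)) + m t (X (x t)) (y t) =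
      -m' (x t) (y t) := by
    rw [← hochschildD₁₂_apply, hX, neg_apply, neg_apply]
  refine ((hm.clm_apply hx).clm_apply hy).congr_deriv ?_
  rw [add_apply]
  linear_combination (norm := module) hXxy

theorem eventually_mul_flow_eq_flow_mul {m m' : ℝ → A →L[ℝ] A →L[ℝ] A} {X G : ℝ → A →L[ℝ] A}
    {t₀ : ℝ} (hm : ∀ᶠ t in 𝓝 t₀, HasDerivAt m (m' t) t) (hXcont : ContinuousAt X t₀)
    (hX : ∀ᶠ t in 𝓝 t₀, hochschildD₁₂ ℝ A (m t) (X t) = -m' t)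
    (hG₀ : G t₀ = 1) (hG : ∀ᶠ t in 𝓝 t₀, HasDerivAt G (X t ∘L G t) t) :
    ∀ᶠ t in 𝓝 t₀, ∀ a b, m t (G t a) (G t b) = G t (m t₀ a b) := by
  have hbound : ∀ᶠ t in 𝓝 t₀, ‖X t‖₊ < ‖X t₀‖₊ + 1 :=
    hXcont.nnnorm.eventually_lt continuousAt_const (lt_add_one _)
  obtain ⟨ε, hε, hball⟩ :=
    (nhds_basis_Ioo_pos t₀).eventually_iff.1 (hbound.and (hm.and (hX.and hG)))
  have hGx {t : ℝ} (ht : t ∈ Ioo (t₀ - ε) (t₀ + ε)) (x : A) :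
      HasDerivAt (fun s => G s x) (X t (G t x)) t := by
    simpa using (hball ht).2.2.2.clm_apply (hasDerivAt_const t x)
  filter_upwards [(nhds_basis_Ioo_pos t₀).mem_of_mem hε] with t ht a b
  refine ODE_solution_unique_of_mem_Ioo (v := fun t y => X t y) (s := fun _ => univ)
    (f := fun t => m t (G t a) (G t b)) (g := fun t => G t (m t₀ a b))
    (fun s hs => ((X s).lipschitz.weaken (hball hs).1.le).lipschitzOnWith)
    (t₀ := t₀) (by simp [hε]) (fun s hs => ⟨?_, mem_univ _⟩)
    (fun s hs => ⟨hGx hs _, mem_univ _⟩) (by simp [hG₀]) ht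
  obtain ⟨-, hms, hXs, -⟩ := hball hs
  exact hasDerivAt_mul_of_hochschildD₁₂_eq hms hXs (hGx hs a) (hGx hs b)

theorem exists_contDiffOn_trivialization [CompleteSpace A] {m m' : ℝ → A →L[ℝ] A →L[ℝ] A}
    {X : ℝ → A →L[ℝ] A} {t₀ : ℝ} {n : ℕ∞} (hm : ∀ᶠ t in 𝓝 t₀, HasDerivAt m (m' t) t)
    (hXsmooth : ∀ᶠ t in 𝓝 t₀, ContDiffAt ℝ n X t)
    (hX : ∀ᶠ t in 𝓝 t₀, hochschildD₁₂ ℝ A (m t) (X t) = -m' t) :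
    ∃ ε > 0, ∃ F : ℝ → A ≃L[ℝ] A,
      ContDiffOn ℝ (n + 1) (fun t => (F t : A →L[ℝ] A)) (Ioo (t₀ - ε) (t₀ + ε)) ∧
      ContDiffOn ℝ (n + 1) (fun t => ((F t).symm : A →L[ℝ] A)) (Ioo (t₀ - ε) (t₀ + ε)) ∧
      ∀ t ∈ Ioo (t₀ - ε) (t₀ + ε), ∀ a b, F t (m t a b) = m t₀ (F t a) (F t b) := by
  let L : ℝ → (A →L[ℝ] A) →L[ℝ] (A →L[ℝ] A) := fun t => .compL ℝ A A A (X t)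
  have hL {t : ℝ} (ht : ContDiffAt ℝ n X t) : ContDiffAt ℝ n L t :=
    contDiffAt_const.clm_apply ht
  obtain ⟨G, hG₀, hG⟩ := exists_eventually_hasDerivAt_clm_apply
    (hXsmooth.mono fun t ht => (hL ht).continuousAt) 1
  have hmul := eventually_mul_flow_eq_flow_mul hm hXsmooth.self_of_nhds.continuousAt hX hG₀ hG
  have hinv : ∀ᶠ t in 𝓝 t₀, ∃ e : A ≃L[ℝ] A, (e : A →L[ℝ] A) = G t :=
    hG.self_of_nhds.continuousAt.eventually <|
      ContinuousLinearEquiv.isOpen.mem_nhds ⟨.refl ℝ A, hG₀.symm⟩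
  obtain ⟨ε, hε, hball⟩ :=
    (nhds_basis_Ioo_pos t₀).eventually_iff.1 (hXsmooth.and (hG.and (hmul.and hinv)))
  choose! e he using fun t ht => (hball (x := t) ht).2.2.2
  have hGsmooth : ContDiffOn ℝ (n + 1) G (Ioo (t₀ - ε) (t₀ + ε)) :=
    contDiffOn_succ_of_hasDerivAt_clm_apply isOpen_Ioo
      (fun t ht => (hL (hball ht).1).contDiffWithinAt) (fun t ht => (hball ht).2.1)
  refine ⟨ε, hε, fun t => (e t).symm, fun t ht => ?_, hGsmooth.congr he, fun t ht a b => ?_⟩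
  · have hinverse : ContDiffWithinAt ℝ (n + 1) (fun s => (G s).inverse) (Ioo (t₀ - ε) (t₀ + ε)) t :=
      (he t ht ▸ contDiffAt_map_inverse (e t) :
        ContDiffAt ℝ (n + 1) ContinuousLinearMap.inverse (G t)).comp_contDiffWithinAt t
        (hGsmooth t ht)
    exact hinverse.congr_of_mem (fun s hs => by simp [← he s hs]) ht
  · have hflow := (hball ht).2.2.1 ((e t).symm a) ((e t).symm b)
    simpa [← he t ht, ContinuousLinearEquiv.symm_apply_eq] using hflow

end Moser

set_option maxSynthPendingDepth 3 in
theorem stmt15_general {A : Type*} [NormedAddCommGroup A] [NormedSpace ℝ A] [CompleteSpace A]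
    (μ : A →L[ℝ] A →L[ℝ] A)
    (hδ : (A →L[ℝ] A →L[ℝ] A) →L[ℝ] (A →L[ℝ] A →L[ℝ] A →L[ℝ] A))
    (hδ_apply : ∀ (Φ : A →L[ℝ] A →L[ℝ] A) (a b c : A),
      hδ Φ a b c = μ a (Φ b c) - Φ (μ a b) c + Φ a (μ b c) - μ (Φ a b) c)
    (h₂ : (A →L[ℝ] A →L[ℝ] A) →L[ℝ] (A →L[ℝ] A))
    (h₃ : (A →L[ℝ] A →L[ℝ] A →L[ℝ] A) →L[ℝ] (A →L[ℝ] A →L[ℝ] A))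
    (hcontract : ∀ (Φ : A →L[ℝ] A →L[ℝ] A) (a b : A),
      (μ a (h₂ Φ b) - h₂ Φ (μ a b) + μ (h₂ Φ a) b) + h₃ (hδ Φ) a b = Φ a b)
    (m : ℝ → A →L[ℝ] A →L[ℝ] A) {n : ℕ∞}
    (hm_smooth : ∀ᶠ t in 𝓝 0, ContDiffAt ℝ (n + 1) m t)
    (hm_assoc : ∀ᶠ t in 𝓝 0, ∀ a b c : A, m t (m t a b) c = m t a (m t b c))
    (hm_zero : m 0 = μ) :
    ∃ ε > 0, ∃ F : ℝ → A ≃L[ℝ] A,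
      ContDiffOn ℝ (n + 1) (fun t => (F t : A →L[ℝ] A)) (Ioo (-ε) ε) ∧
      ContDiffOn ℝ (n + 1) (fun t => ((F t).symm : A →L[ℝ] A)) (Ioo (-ε) ε) ∧
      ∀ t ∈ Ioo (-ε) ε, ∀ a b : A, F t (m t a b) = μ (F t a) (F t b) := by
  subst hm_zero
  have hδ_eq : hδ = hochschildD₂₃ ℝ A (m 0) := by
    ext Φ a b c
    rw [hδ_apply, hochschildD₂₃_apply]
  have hhomotopy : hochschildD₁₂ ℝ A (m 0) ∘L h₂ + h₃ ∘L hochschildD₂₃ ℝ A (m 0) = 1 := by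
    ext Φ a b
    simpa [hochschildD₁₂_apply, hδ_eq] using hcontract Φ a b
  have hderiv : ∀ᶠ t in 𝓝 0, HasDerivAt m (deriv m t) t :=
    hm_smooth.mono fun t ht => (ht.differentiableAt (by simp)).hasDerivAt
  have hderiv_smooth : ∀ᶠ t in 𝓝 0, ContDiffAt ℝ n (fun s => -deriv m s) t :=
    hm_smooth.mono fun t ht => (ht.fderiv_right_succ.clm_apply contDiffAt_const).neg
  have hD_smooth {V : Type _} [NormedAddCommGroup V] [NormedSpace ℝ V]
      (D : (A →L[ℝ] A →L[ℝ] A) →L[ℝ] V) : ∀ᶠ t in 𝓝 0, ContDiffAt ℝ n (fun s => D (m s)) t :=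
    hm_smooth.mono fun t ht => D.contDiff.contDiffAt.comp t (ht.of_le le_self_add)
  have hcocycle : ∀ᶠ t in 𝓝 0, hochschildD₂₃ ℝ A (m t) (-deriv m t) = 0 := by
    filter_upwards [hderiv, hm_assoc.eventually_nhds] with t ht hassoc
    rw [map_neg, hochschildD₂₃_eq_zero_of_hasDerivAt ht hassoc, neg_zero]
  obtain ⟨X, hX⟩ := exists_contDiffAt_primitive (d₁ := fun t => hochschildD₁₂ ℝ A (m t))
    (d₂ := fun t => hochschildD₂₃ ℝ A (m t)) h₂ h₃ hhomotopy
    (hD_smooth (hochschildD₁₂ ℝ A)) (hD_smooth (hochschildD₂₃ ℝ A)) hderiv_smooth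
    (hm_assoc.mono fun t ht => hochschildD₂₃_comp_hochschildD₁₂ ht) hcocycle
  simpa using exists_contDiffOn_trivialization hderiv (hX.mono fun t ht => ht.1)
    (hX.mono fun t ht => ht.2)

/-- Let `A` be a Banach algebra (a Banach space with a continuous associative
multiplication `μ`) whose Hochschild cochain complex admits a continuous linear contracting
homotopy in degree `2`: `δh₂ + h₃δ = 1` on `C²(A,A)` (where `hδ` is the bundled Hochschild
coboundary `C² → C³`, characterized by the usual pointwise formula).  Then `A` is smoothly
rigid: every smooth deformation `{m_t}` of continuous associative multiplications with
`m 0 = μ` is trivial on a subinterval `(−ε, ε) ∋ 0`, i.e. there are continuous linear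
algebra isomorphisms `F_t : A_t ≅ A` depending smoothly on `t`. -/
theorem stmt15 {A : Type*} [NormedAddCommGroup A] [NormedSpace ℝ A] [CompleteSpace A]
    -- the multiplication of the Banach algebra `A`
    (μ : A →L[ℝ] A →L[ℝ] A)
    (hμ_assoc : ∀ a b c : A, μ (μ a b) c = μ a (μ b c))
    -- the bundled Hochschild coboundary `δ : C²(A,A) → C³(A,A)`
    (hδ : (A →L[ℝ] A →L[ℝ] A) →L[ℝ] (A →L[ℝ] A →L[ℝ] A →L[ℝ] A))
    (hδ_apply : ∀ (Φ : A →L[ℝ] A →L[ℝ] A) (a b c : A),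
      hδ Φ a b c = μ a (Φ b c) - Φ (μ a b) c + Φ a (μ b c) - μ (Φ a b) c)
    -- a continuous linear contracting homotopy in degree 2: `δ h₂ + h₃ δ = 1` on `C²`
    (h₂ : (A →L[ℝ] A →L[ℝ] A) →L[ℝ] (A →L[ℝ] A))
    (h₃ : (A →L[ℝ] A →L[ℝ] A →L[ℝ] A) →L[ℝ] (A →L[ℝ] A →L[ℝ] A))
    (hcontract : ∀ (Φ : A →L[ℝ] A →L[ℝ] A) (a b : A),
      (μ a (h₂ Φ b) - h₂ Φ (μ a b) + μ (h₂ Φ a) b) + h₃ (hδ Φ) a b = Φ a b)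
    -- a smooth deformation of associative multiplications with `m 0 = μ`
    (m : ℝ → A →L[ℝ] A →L[ℝ] A)
    (hm_smooth : ContDiff ℝ (⊤ : ℕ∞) m)
    (hm_assoc : ∀ (t : ℝ) (a b c : A), m t (m t a b) c = m t a (m t b c))
    (hm_zero : m 0 = μ) :
    ∃ ε > 0, ∃ F : ℝ → A ≃L[ℝ] A,
      (∀ x : A, ContDiffOn ℝ (⊤ : ℕ∞) (fun t => F t x) (Ioo (-ε) ε)) ∧
      (∀ x : A, ContDiffOn ℝ (⊤ : ℕ∞) (fun t => (F t).symm x) (Ioo (-ε) ε)) ∧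
      ∀ t ∈ Ioo (-ε) ε, ∀ a b : A, F t (m t a b) = μ (F t a) (F t b) := by
  obtain ⟨ε, hε, F, hF, hF', hmul⟩ := stmt15_general (n := ⊤) μ hδ hδ_apply h₂ h₃ hcontract m
    (.of_forall fun _ => hm_smooth.contDiffAt) (.of_forall hm_assoc) hm_zero
  exact ⟨ε, hε, F, fun _ => hF.clm_apply contDiffOn_const, fun _ => hF'.clm_apply contDiffOn_const,
    hmul⟩
end
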